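/- Let r > 0, a > 0, b > 0, and let x, y : ℝ → ℝ be differentiable functions with x(t) ≠ 0 for all t, satisfying x'(t) = −r·x(t)·y(t) and y'(t) = x(t) − a·b/x(t) for all t ∈ ℝ, with x(0) = a and y(0) = 0. Then y' is differentiable and y satisfies the Duffing equation y''(t) = −r·y(t)·(a + b − (r/2)·y(t)²) for all t ∈ ℝ, with y(0) = 0 and y'(0) = a − b. -/

import Mathlib

/-!
Differentiating `y' = x − ab/x` along the system gives `y'' = −r y (x + ab/x)`. The quantity
`x + ab/x + (r/2) y²` has zero derivative along solutions, so it keeps its initial value `a + b`;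
substituting `x + ab/x = a + b − (r/2) y²` yields the Duffing equation.
-/

/-- The planar system `x' = −r x y`, `y' = x − ab/x` with `x(0) = a`, `y(0) = 0`
reduces to the Duffing equation `y'' = −r y (a + b − (r/2) y²)` with `y(0) = 0`,
`y'(0) = a − b`. -/
theorem planar_system_reduces_to_duffing (r a b : ℝ) (hr : r > 0)
    (ha : a > 0) (hb : b > 0) (x y : ℝ → ℝ) (hx0 : ∀ t : ℝ, x t ≠ 0)
    (hx : Differentiable ℝ x) (hy : Differentiable ℝ y)
    (hdx : ∀ t : ℝ, deriv x t = -r * x t * y t)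
    (hdy : ∀ t : ℝ, deriv y t = x t - a * b / x t)
    (hxa : x 0 = a) (hy0 : y 0 = 0) :
    Differentiable ℝ (deriv y) ∧
      (∀ t : ℝ, deriv (deriv y) t = -r * y t * (a + b - r / 2 * (y t) ^ 2)) ∧
      y 0 = 0 ∧ deriv y 0 = a - b := by
  have hX (t : ℝ) : HasDerivAt x (-r * x t * y t) t := hdx t ▸ (hx t).hasDerivAt
  have hY (t : ℝ) : HasDerivAt y (x t - a * b / x t) t := hdy t ▸ (hy t).hasDerivAt
  have hQ (t : ℝ) : HasDerivAt (fun s => a * b / x s) (r * y t * (a * b / x t)) t := by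
    refine ((hasDerivAt_const t (a * b)).fun_div (hX t) (hx0 t)).congr_deriv ?_
    have := hx0 t
    field_simp
    ring
  have hY' (t : ℝ) : HasDerivAt (deriv y) (-r * y t * (x t + a * b / x t)) t := by
    rw [funext hdy]
    exact ((hX t).fun_sub (hQ t)).congr_deriv (by ring)
  have hE (t : ℝ) : HasDerivAt (fun s => x s + a * b / x s + r / 2 * y s ^ 2) 0 t := by
    refine (((hX t).fun_add (hQ t)).fun_add (((hY t).fun_pow 2).const_mul (r / 2))).congr_deriv ?_
    push_cast
    ring
  have hab : a * b / a = b := by field_simp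
  have hconst (t : ℝ) : x t + a * b / x t + r / 2 * y t ^ 2 = a + b := by
    have h := is_const_of_deriv_eq_zero (fun s => (hE s).differentiableAt)
      (fun s => (hE s).deriv) t 0
    simpa [hxa, hy0, hab] using h
  refine ⟨fun t => (hY' t).differentiableAt, fun t => ?_, hy0, by rw [hdy, hxa, hab]⟩
  rw [(hY' t).deriv, ← hconst t]
  ring
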